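/- Let 𝒜 be an abelian category in which every object has finite length. (1) If every simple object of 𝒜 admits a nonzero morphism to an injective object of 𝒜, then 𝒜 has enough injectives (every object admits a monomorphism into an injective object). (2) If every simple object of 𝒜 admits a nonzero morphism from a projective object of 𝒜, then 𝒜 has enough projectives (every object admits an epimorphism from a projective object). -/

import Mathlib

open CategoryTheory CategoryTheory.Limits

universe v u

/-- An object of an abelian category has finite length if it admits a finite composition
series, i.e. it is zero or an extension of a simple object by an object of finite length. -/
inductive HasFiniteLength {C : Type u} [Category.{v} C] [Abelian C] : C → Prop
  | of_isZero {X : C} (h : IsZero X) : HasFiniteLength X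
  | step {X S : C} (g : X ⟶ S) (hg : Epi g) (hS : Simple S)
      (h : HasFiniteLength (kernel g)) : HasFiniteLength X

/-- Lemma: in an abelian category in which every object has finite length, if every simple
object admits a nonzero morphism to an injective object then there are enough injectives,
and if every simple object admits a nonzero morphism from a projective object then there are
enough projectives. -/
theorem enoughInjectives_and_enoughProjectives_of_finiteLength
    {C : Type u} [Category.{v} C] [Abelian C]
    (hlen : ∀ X : C, HasFiniteLength X) :
    ((∀ S : C, Simple S → ∃ (I : C) (f : S ⟶ I), Injective I ∧ f ≠ 0) →
      EnoughInjectives C) ∧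
    ((∀ S : C, Simple S → ∃ (P : C) (f : P ⟶ S), Projective P ∧ f ≠ 0) →
      EnoughProjectives C) := by
  constructor
  · intro h
    refine ⟨fun X => ?_⟩
    induction hlen X with
    | @of_isZero X hX =>
      open scoped ZeroObject in
      exact ⟨⟨0, inferInstance, 0, ⟨fun _ _ _ => hX.eq_of_tgt _ _⟩⟩⟩
    | @step X S g hg hS _ ih =>
      obtain ⟨⟨I, hI, i, hi⟩⟩ := ih
      obtain ⟨J, f, hJ, hf⟩ := h S hS
      have hfm : Mono f := Preadditive.mono_of_kernel_zero (kernel_zero_of_nonzero_from_simple hf)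
      refine ⟨⟨I ⊞ J, inferInstance,
        biprod.lift (Injective.factorThru i (kernel.ι g)) (g ≫ f), ?_⟩⟩
      refine Preadditive.mono_of_cancel_zero _ fun t ht => ?_
      have h1 := ht =≫ biprod.fst
      have h2 := ht =≫ biprod.snd
      simp only [Category.assoc, biprod.lift_fst, biprod.lift_snd, zero_comp] at h1 h2
      rw [← Category.assoc] at h2
      have h3 : t ≫ g = 0 := zero_of_comp_mono f h2
      rw [← kernel.lift_ι g t h3, Category.assoc, Injective.comp_factorThru] at h1
      rw [← kernel.lift_ι g t h3, zero_of_comp_mono i h1, zero_comp]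
  · intro h
    refine ⟨fun X => ?_⟩
    induction hlen X with
    | @of_isZero X hX =>
      open scoped ZeroObject in
      exact ⟨@ProjectivePresentation.mk _ _ _ 0 inferInstance 0 ⟨fun _ _ _ => hX.eq_of_src _ _⟩⟩
    | @step X S g hg hS _ ih =>
      obtain ⟨R⟩ := ih
      obtain ⟨Q, f, hQ, hf⟩ := h S hS
      have hfe : Epi f := epi_of_nonzero_to_simple hf
      refine ⟨@ProjectivePresentation.mk _ _ _ (R.p ⊞ Q) inferInstance
        (biprod.desc (R.f ≫ kernel.ι g) (Projective.factorThru f g)) ?_⟩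
      refine Preadditive.epi_of_cancel_zero _ fun t ht => ?_
      have h1 := biprod.inl ≫= ht
      have h2 := biprod.inr ≫= ht
      simp only [biprod.inl_desc_assoc, biprod.inr_desc_assoc, Category.assoc, comp_zero] at h1 h2
      have h3 : kernel.ι g ≫ t = 0 := zero_of_epi_comp R.f h1
      rw [← Abelian.comp_epiDesc g t h3, ← Category.assoc, Projective.factorThru_comp] at h2
      rw [← Abelian.comp_epiDesc g t h3, zero_of_epi_comp f h2, comp_zero]
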